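/- (Explicit half-space stationary dead-core solution, one-dimensional form) Let p ≥ 2, 0 < q < 1 and λ > 0. Set α := p/(p−1−q) and let κ > 0 satisfy κ^{p−1−q} = λ·(p−1−q)^p / ( p^{p−1}·(p−1)·(1+q) ). Define u : ℝ → ℝ by u(x) := κ·max(x,0)^α. Then u is differentiable on ℝ, the function g(x) := |u′(x)|^{p−2}·u′(x) is differentiable on ℝ, and g′(x) = λ·(max(u(x),0))^q for every x ∈ ℝ. Thus u is a time-independent solution of Δ_p u − ∂_t u = λ u₊^q in one space dimension, with dead core {x ≤ 0}, exhibiting the sharp growth rate α = p/(p−1−q) from its free boundary point x = 0. -/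

import Mathlib

noncomputable section

open Real Set

/-! The flux `|u'| ^ (p - 2) * u'` of the profile `κ * x₊ ^ α` is again a constant multiple of a
power of `x₊`, with exponent `(α - 1) * (p - 1)`. The choice of `α` makes this exponent equal to
`q * α + 1`, so that differentiating once more leaves the power `x₊ ^ (q * α)` of `u₊ ^ q`, and the
choice of `κ` makes the two constants agree. Both `α` and `q * α + 1` exceed `1`, so the one-sided
formulas match to first order at `x = 0`. -/

/-- The flux whose derivative is the one-dimensional `p`-Laplacian of `u`. For `1 < p < 2` its value
at a critical point of `u` is `0`, as for the continuous extension of `s ↦ |s| ^ (p - 2) * s`. -/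
def pLaplacianFlux (p : ℝ) (u : ℝ → ℝ) (x : ℝ) : ℝ :=
  |deriv u x| ^ (p - 2) * deriv u x

theorem continuous_max_zero_rpow {a : ℝ} (ha : 0 ≤ a) : Continuous fun x : ℝ => max x 0 ^ a :=
  (continuous_id.max continuous_const).rpow_const fun _ => Or.inr ha

theorem hasDerivAt_max_zero_rpow {a : ℝ} (ha : 1 < a) (x : ℝ) :
    HasDerivAt (fun y : ℝ => max y 0 ^ a) (a * max x 0 ^ (a - 1)) x := by
  -- Continuity of `x₊ ^ a` and of the candidate derivative settles the kink at `0`.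
  refine hasDerivAt_of_hasDerivAt_of_ne' (x := 0) (g := fun y : ℝ => a * max y 0 ^ (a - 1))
    (fun y hy => ?_) (continuous_max_zero_rpow (by linarith)).continuousAt
    (continuous_const.mul (continuous_max_zero_rpow (by linarith))).continuousAt x
  rcases hy.lt_or_gt with hneg | hpos
  · have heq : (fun z : ℝ => max z 0 ^ a) =ᶠ[nhds y] fun _ => 0 := by
      filter_upwards [Iio_mem_nhds hneg] with z hz
      rw [max_eq_right (le_of_lt hz), zero_rpow (by linarith)]
    have hzero : a * max y 0 ^ (a - 1) = 0 := by
      rw [max_eq_right hneg.le, zero_rpow (by linarith), mul_zero]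
    simpa only [hzero] using (hasDerivAt_const y (0 : ℝ)).congr_of_eventuallyEq heq
  · have heq : (fun z : ℝ => max z 0 ^ a) =ᶠ[nhds y] fun z => z ^ a := by
      filter_upwards [Ioi_mem_nhds hpos] with z hz
      rw [max_eq_left (le_of_lt hz)]
    simpa only [max_eq_left hpos.le] using
      (hasDerivAt_rpow_const (Or.inl hpos.ne')).congr_of_eventuallyEq heq

theorem hasDerivAt_const_mul_max_zero_rpow (c : ℝ) {a : ℝ} (ha : 1 < a) (x : ℝ) :
    HasDerivAt (fun y : ℝ => c * max y 0 ^ a) (c * a * max x 0 ^ (a - 1)) x := by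
  simpa only [mul_assoc] using (hasDerivAt_max_zero_rpow ha x).const_mul c

theorem abs_rpow_sub_two_mul_self {p s : ℝ} (hp : p ≠ 1) (hs : 0 ≤ s) :
    |s| ^ (p - 2) * s = s ^ (p - 1) := by
  have hexp : p - 2 + 1 = p - 1 := by ring
  rw [abs_of_nonneg hs, ← rpow_add_one' hs (by rwa [hexp, sub_ne_zero]), hexp]

theorem pLaplacianFlux_const_mul_max_zero_rpow {p c a : ℝ} (hp : p ≠ 1) (hc : 0 ≤ c)
    (ha : 1 < a) (x : ℝ) :
    pLaplacianFlux p (fun y => c * max y 0 ^ a) x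
      = (c * a) ^ (p - 1) * max x 0 ^ ((a - 1) * (p - 1)) := by
  have hx : 0 ≤ max x 0 := le_max_right x 0
  have hca : 0 ≤ c * a := by positivity
  rw [pLaplacianFlux, (hasDerivAt_const_mul_max_zero_rpow c ha x).deriv,
    abs_rpow_sub_two_mul_self hp (by positivity), mul_rpow hca (by positivity), ← rpow_mul hx]

theorem hasDerivAt_pLaplacianFlux_const_mul_max_zero_rpow {p c a : ℝ} (hc : 0 ≤ c) (ha : 1 < a)
    (hexp : 1 < (a - 1) * (p - 1)) (x : ℝ) :
    HasDerivAt (pLaplacianFlux p fun y => c * max y 0 ^ a)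
      ((c * a) ^ (p - 1) * ((a - 1) * (p - 1)) * max x 0 ^ ((a - 1) * (p - 1) - 1)) x := by
  have hp : p ≠ 1 := by rintro rfl; norm_num at hexp
  rw [funext (pLaplacianFlux_const_mul_max_zero_rpow hp hc ha)]
  exact hasDerivAt_const_mul_max_zero_rpow _ hexp x

section Constants

variable {p q : ℝ}

theorem deadCore_flux_exponent (hr : p - 1 - q ≠ 0) :
    (p / (p - 1 - q) - 1) * (p - 1) = q * (p / (p - 1 - q)) + 1 := by
  field_simp
  ring

theorem deadCore_rpow_mul_flux_exponent (hp : 0 ≤ p) (hqp : q < p - 1) :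
    (p / (p - 1 - q)) ^ (p - 1) * (q * (p / (p - 1 - q)) + 1)
      = p ^ (p - 1) * (p - 1) * (1 + q) / (p - 1 - q) ^ p := by
  have hr : 0 < p - 1 - q := by linarith
  have hexp : q * (p / (p - 1 - q)) + 1 = (p - 1) * (1 + q) / (p - 1 - q) := by
    field_simp
    ring
  rw [hexp, div_rpow hp hr.le, rpow_sub_one hr.ne']
  field_simp

theorem deadCore_flux_coefficient {lam κ : ℝ} (hp : 1 < p) (hq : -1 < q) (hqp : q < p - 1)
    (hκ : 0 < κ)
    (hκeq : κ ^ (p - 1 - q) = lam * (p - 1 - q) ^ p / (p ^ (p - 1) * (p - 1) * (1 + q))) :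
    (κ * (p / (p - 1 - q))) ^ (p - 1) * (q * (p / (p - 1 - q)) + 1) = lam * κ ^ q := by
  have hr : 0 < p - 1 - q := by linarith
  have hp0 : 0 < p := by linarith
  have hp1 : 0 < p - 1 := by linarith
  have hq1 : 0 < 1 + q := by linarith
  have hκsplit : κ ^ (p - 1) = κ ^ (p - 1 - q) * κ ^ q := by
    rw [← rpow_add hκ, sub_add_cancel]
  rw [mul_rpow hκ.le (by positivity), mul_assoc, deadCore_rpow_mul_flux_exponent hp0.le hqp,
    hκsplit, hκeq]
  field_simp

end Constants

theorem halfspace_stationary_dead_core_solution_general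
    (p q lam : ℝ) (hq : 0 < q) (hqp : q < p - 1)
    (α κ : ℝ) (hα : α = p / (p - 1 - q)) (hκ : 0 < κ)
    (hκeq : κ ^ (p - 1 - q) = lam * (p - 1 - q) ^ p / (p ^ (p - 1) * (p - 1) * (1 + q)))
    (u : ℝ → ℝ) (hu : ∀ x : ℝ, u x = κ * max x 0 ^ α) :
    (∀ x : ℝ, DifferentiableAt ℝ u x) ∧
    (∀ x : ℝ, DifferentiableAt ℝ (fun y => |deriv u y| ^ (p - 2) * deriv u y) x) ∧
    (∀ x : ℝ, deriv (fun y => |deriv u y| ^ (p - 2) * deriv u y) x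
      = lam * (max (u x) 0) ^ q) := by
  have hr : 0 < p - 1 - q := by linarith
  have hα1 : 1 < α := by rw [hα, one_lt_div hr]; linarith
  have hexp : (α - 1) * (p - 1) = q * α + 1 := hα ▸ deadCore_flux_exponent hr.ne'
  have hcoef : (κ * α) ^ (p - 1) * (q * α + 1) = lam * κ ^ q :=
    hα ▸ deadCore_flux_coefficient (by linarith) (by linarith) hqp hκ hκeq
  have huq (x : ℝ) : max (u x) 0 ^ q = κ ^ q * max x 0 ^ (q * α) := by
    have hx : 0 ≤ max x 0 := le_max_right x 0
    rw [hu, max_eq_left (by positivity), mul_rpow hκ.le (by positivity), ← rpow_mul hx,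
      mul_comm α]
  have hflux (x : ℝ) : HasDerivAt (pLaplacianFlux p u) (lam * max (u x) 0 ^ q) x := by
    have hqα : 1 < (α - 1) * (p - 1) := by rw [hexp]; linarith [show 0 < q * α by positivity]
    have h := hasDerivAt_pLaplacianFlux_const_mul_max_zero_rpow hκ.le hα1 hqα x
    rwa [hexp, hcoef, add_sub_cancel_right, mul_assoc, ← huq, ← funext hu] at h
  have hu' (x : ℝ) : DifferentiableAt ℝ u x :=
    funext hu ▸ (hasDerivAt_const_mul_max_zero_rpow κ hα1 x).differentiableAt
  exact ⟨hu', fun x => (hflux x).differentiableAt, fun x => (hflux x).deriv⟩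

/-- **Explicit half-space stationary dead-core solution (one-dimensional form).**
With `α = p/(p-1-q)` and `κ > 0` satisfying
`κ^(p-1-q) = λ (p-1-q)^p / (p^(p-1) (p-1) (1+q))`, the function `u(x) = κ (max x 0)^α`
is differentiable on `ℝ` and `g := |u'|^(p-2) u'` is differentiable with
`g' x = λ (max (u x) 0)^q`, i.e. `u` is a time-independent solution of
`Δ_p u - ∂ₜ u = λ u₊^q` in one space dimension with dead core `{x ≤ 0}`. -/
theorem halfspace_stationary_dead_core_solution
    (p q lam : ℝ) (hp : 2 ≤ p) (hq0 : 0 < q) (hq1 : q < 1) (hlam : 0 < lam)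
    (α κ : ℝ) (hα : α = p / (p - 1 - q)) (hκ : 0 < κ)
    (hκeq : κ ^ (p - 1 - q) = lam * (p - 1 - q) ^ p / (p ^ (p - 1) * (p - 1) * (1 + q)))
    (u : ℝ → ℝ) (hu : ∀ x : ℝ, u x = κ * max x 0 ^ α) :
    (∀ x : ℝ, DifferentiableAt ℝ u x) ∧
    (∀ x : ℝ, DifferentiableAt ℝ (fun y => |deriv u y| ^ (p - 2) * deriv u y) x) ∧
    (∀ x : ℝ, deriv (fun y => |deriv u y| ^ (p - 2) * deriv u y) x
      = lam * (max (u x) 0) ^ q) :=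
  halfspace_stationary_dead_core_solution_general p q lam hq0 (by linarith) α κ hα hκ hκeq u hu
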